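/- arXiv:math/0605099 — 2 statements merged into one kernel-verified Lean document; each statement's English description precedes it below -/
import Mathlib

section
/- Let E be a finite set, P : E × E → ℝ a row-stochastic matrix, and T ⊆ E with ∅ ≠ T ⊊ E. Let M_E be the equivalence relation on E with the two classes T and E ∖ T, and suppose S is an equivalence relation on E that is lumpable for P, has T as an equivalence class, and is maximal with these properties (every lumpable equivalence relation having T as a class is finer than S). Let N be the number of equivalence classes of S (so N ≥ 2). Then 𝒫^{N−2}(M_E) = S. -/
/-!
Write `Rₙ = 𝒫ⁿ(M_E)`. A lumpable `S` finer than `R` is also finer than `𝒫(R)`, because every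
`R`-class is a union of `S`-classes (`le_Pop_of_lumpable`); hence `S ⊑ Rₙ ⊑ M_E` for all `n`, and
`T`, being a class of both ends, is a class of every `Rₙ`. If `Rₙ` is a fixed point of `𝒫`, it is
lumpable, so `Rₙ = S` by maximality. Otherwise `Rₙ₊₁` is strictly finer than `Rₙ` and has at least
one more class (`eq_of_le_of_card_le`). Since `M_E` has two classes and each `Rₙ` has at most `N`,
the relation `S` is reached after at most `N - 2` steps.
-/

open scoped Classical

/-- A matrix `P` on a finite state space is row-stochastic. -/
def IsRowStochastic {E : Type*} [Fintype E] (P : E → E → ℝ) : Prop :=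
  (∀ e e', 0 ≤ P e e') ∧ ∀ e, ∑ e', P e e' = 1

/-- The sum of `P e x` over the `R`-equivalence class of `c`. -/
noncomputable def classSum {E : Type*} [Fintype E] (P : E → E → ℝ) (R : Setoid E)
    (e c : E) : ℝ :=
  ∑ x ∈ Finset.univ.filter (fun y => R.r y c), P e x

/-- `T` is an equivalence class of the equivalence relation `R`. -/
def IsClass {E : Type*} (R : Setoid E) (T : Set E) : Prop :=
  ∃ e, T = {x | R.r x e}

/-- `R` is lumpable for `P`: related states have equal transition probability into
every `R`-equivalence class. -/
def Lumpable {E : Type*} [Fintype E] (P : E → E → ℝ) (R : Setoid E) : Prop :=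
  ∀ e₁ e₂, R.r e₁ e₂ → ∀ c, classSum P R e₁ c = classSum P R e₂ c

/-- The operator `𝒫`: `e₁ 𝒫(R) e₂` iff `e₁ R e₂` and `e₁, e₂` have equal transition
probability into every `R`-equivalence class. -/
noncomputable def Pop {E : Type*} [Fintype E] (P : E → E → ℝ) (R : Setoid E) : Setoid E where
  r e₁ e₂ := R.r e₁ e₂ ∧ ∀ c, classSum P R e₁ c = classSum P R e₂ c
  iseqv := by
    refine ⟨fun e => ⟨R.iseqv.refl e, fun _ => rfl⟩, ?_, ?_⟩
    · exact fun h => ⟨R.iseqv.symm h.1, fun c => (h.2 c).symm⟩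
    · exact fun h₁ h₂ => ⟨R.iseqv.trans h₁.1 h₂.1, fun c => (h₁.2 c).trans (h₂.2 c)⟩

/-- The equivalence relation on `E` whose two classes are `T` and `E \ T`. -/
def ME {E : Type*} (T : Set E) : Setoid E where
  r e₁ e₂ := e₁ ∈ T ↔ e₂ ∈ T
  iseqv := ⟨fun _ => Iff.rfl, Iff.symm, Iff.trans⟩

theorem Pop_le {E : Type*} [Fintype E] (P : E → E → ℝ) (R : Setoid E) : Pop P R ≤ R :=
  fun _ _ h => h.1

theorem lumpable_of_Pop_eq {E : Type*} [Fintype E] {P : E → E → ℝ} {R : Setoid E}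
    (h : Pop P R = R) : Lumpable P R := by
  intro e₁ e₂ h12
  rw [← h] at h12
  exact h12.2

/-- An `R`-class is a disjoint union of classes of the finer relation `S`, and states related by a
lumpable `S` have equal transition probability into each of the latter. -/
theorem le_Pop_of_lumpable {E : Type*} [Fintype E] {P : E → E → ℝ} {R S : Setoid E}
    (hS : Lumpable P S) (hSR : S ≤ R) : S ≤ Pop P R := by
  intro e₁ e₂ h12
  refine ⟨hSR h12, fun c => ?_⟩
  unfold classSum
  rw [← Finset.sum_fiberwise _ (fun x : E => (Quotient.mk S x)) (P e₁),
    ← Finset.sum_fiberwise _ (fun x : E => (Quotient.mk S x)) (P e₂)]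
  refine Finset.sum_congr rfl fun q _ => ?_
  induction q using Quotient.inductionOn with | _ d => ?_
  by_cases hd : R.r d c
  · have key : (Finset.univ.filter fun y => R.r y c).filter
        (fun x => Quotient.mk S x = Quotient.mk S d) = Finset.univ.filter fun y => S.r y d := by
      ext x
      simp only [Finset.mem_filter, Finset.mem_univ, true_and]
      exact ⟨fun h => Quotient.exact h.2, fun h => ⟨R.trans (hSR h) hd, Quotient.sound h⟩⟩
    rw [key]
    exact hS e₁ e₂ h12 d
  · have key : (Finset.univ.filter fun y => R.r y c).filter
        (fun x => Quotient.mk S x = Quotient.mk S d) = ∅ := by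
      ext x
      simp only [Finset.mem_filter, Finset.mem_univ, true_and, Finset.notMem_empty, iff_false]
      rintro ⟨h1, h2⟩
      exact hd (R.trans (R.symm (hSR (Quotient.exact h2))) h1)
    rw [key]
    simp

/-- A refinement that has no more classes is not proper: the canonical surjection
`E/R → E/R'` is then injective. -/
theorem eq_of_le_of_card_le {E : Type*} [Finite E] {R R' : Setoid E} (h : R ≤ R')
    (hc : Nat.card (Quotient R) ≤ Nat.card (Quotient R')) : R = R' := by
  let f : Quotient R → Quotient R' := Quotient.map id fun _ _ hab => h hab
  have hf : Function.Surjective f := by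
    intro q
    induction q using Quotient.inductionOn with | _ d => exact ⟨Quotient.mk R d, rfl⟩
  have hinj : Function.Injective f := (hf.bijective_of_nat_card_le hc).1
  refine le_antisymm h fun a b hab => ?_
  exact Quotient.exact (hinj (a₁ := Quotient.mk R a) (a₂ := Quotient.mk R b) (Quotient.sound hab))

theorem two_le_card_of_le_ME {E : Type*} [Finite E] {T : Set E} (hT : T.Nonempty)
    (hTne : T ≠ Set.univ) {R : Setoid E} (h : R ≤ ME T) : 2 ≤ Nat.card (Quotient R) := by
  obtain ⟨t, ht⟩ := hT
  obtain ⟨u, hu⟩ := (Set.ne_univ_iff_exists_notMem T).1 hTne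
  have : Nontrivial (Quotient R) :=
    ⟨Quotient.mk R t, Quotient.mk R u, fun hq => hu ((h (Quotient.exact hq)).1 ht)⟩
  exact Finite.one_lt_card

theorem le_ME_of_isClass {E : Type*} {T : Set E} {S : Setoid E} (h : IsClass S T) :
    S ≤ ME T := by
  obtain ⟨e, rfl⟩ := h
  exact fun a b hab => ⟨fun ha => S.trans (S.symm hab) ha, fun hb => S.trans hab hb⟩

theorem isClass_of_between {E : Type*} {T : Set E} {S R : Setoid E} (h : IsClass S T)
    (hSR : S ≤ R) (hR : R ≤ ME T) : IsClass R T := by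
  obtain ⟨e, he⟩ := h
  have heT : e ∈ T := by rw [he]; exact S.refl e
  refine ⟨e, Set.ext fun x => ⟨fun hx => ?_, fun hx => (hR hx).2 heT⟩⟩
  rw [he] at hx
  exact hSR hx

/-- If `S` is the maximal lumpable equivalence relation having `T` as a class and `N` is
its number of equivalence classes (so `N ≥ 2`), then `𝒫^{N-2}(M_E) = S`. -/
theorem iterate_Pop_ME_eq {E : Type*} [Fintype E]
    (P : E → E → ℝ) (hP : IsRowStochastic P)
    (T : Set E) (hT : T.Nonempty) (hTne : T ≠ Set.univ)
    (S : Setoid E) (hSl : Lumpable P S) (hST : IsClass S T)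
    (hmax : ∀ R' : Setoid E, Lumpable P R' → IsClass R' T →
      ∀ e₁ e₂, R'.r e₁ e₂ → S.r e₁ e₂) :
    2 ≤ Nat.card (Quotient S) ∧
    (Pop P)^[Nat.card (Quotient S) - 2] (ME T) = S := by
  have hSM := le_ME_of_isClass hST
  have h2 := two_le_card_of_le_ME hT hTne hSM
  refine ⟨h2, ?_⟩
  have between : ∀ n, S ≤ (Pop P)^[n] (ME T) ∧ (Pop P)^[n] (ME T) ≤ ME T := by
    intro n
    induction n with
    | zero => exact ⟨hSM, le_rfl⟩
    | succ k ih =>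
      rw [Function.iterate_succ_apply']
      exact ⟨le_Pop_of_lumpable hSl ih.1, (Pop_le P _).trans ih.2⟩
  have hPS : Pop P S = S := le_antisymm (Pop_le P S) (le_Pop_of_lumpable hSl le_rfl)
  have step : ∀ n, (Pop P)^[n] (ME T) = S ∨
      n + 2 ≤ Nat.card (Quotient ((Pop P)^[n] (ME T))) := by
    intro n
    induction n with
    | zero => exact Or.inr (two_le_card_of_le_ME hT hTne le_rfl)
    | succ k ih =>
      obtain ⟨hSk, hkM⟩ := between k
      rw [Function.iterate_succ_apply']
      generalize (Pop P)^[k] (ME T) = R at *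
      rcases ih with rfl | ih
      · exact Or.inl hPS
      · by_cases hfix : Pop P R = R
        · left
          rw [hfix]
          have hle : R ≤ S := fun a b hab =>
            hmax R (lumpable_of_Pop_eq hfix) (isClass_of_between hST hSk hkM) a b hab
          exact le_antisymm hle hSk
        · right
          by_contra hlt
          exact hfix (eq_of_le_of_card_le (Pop_le P R) (by omega))
  rcases step (Nat.card (Quotient S) - 2) with h | h
  · exact h
  · exact (eq_of_le_of_card_le (between _).1 (by omega)).symm
end

section
/- Let E be a finite set, P : E × E → ℝ a row-stochastic matrix, and T ⊆ E with ∅ ≠ T ⊊ E. Let M_E be the equivalence relation on E with the two classes T and E ∖ T, and suppose S is an equivalence relation on E that is lumpable for P, has T as an equivalence class, and is maximal with these properties (every lumpable equivalence relation having T as a class is finer than S). Let N be the number of equivalence classes of S. Then 𝒫^{m}(M_E) = S for every m ≥ N − 2; in particular 𝒫^{|E|−2}(M_E) = S whenever |E| ≥ 2. -/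
/-!
The relations `Rₙ = 𝒫ⁿ(M_E)` form a decreasing chain of equivalence relations, all coarser than `S`:
`S` refines `M_E`, and if a lumpable `S` refines `R` then it refines `𝒫(R)`, because every `R`-class
is a disjoint union of `S`-classes (`Lumpable.le_Pop`). A fixed point `Rₙ₊₁ = Rₙ` is lumpable, and it
has `T` as a class since it lies between `S` and `M_E`; maximality then forces `Rₙ = S`
(`eq_of_le_Pop`). Hence, until it reaches `S`, the chain gains at least one class at each step,
starting from the two classes of `M_E`, so `Rₙ ≠ S` implies that `Rₙ` has at least `n + 2` classes.
A relation strictly coarser than `S` has fewer than `N` classes, so this fails for `n ≥ N - 2`.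
-/

open scoped Classical

theorem card_quotient_lt_of_lt {E : Type*} [Finite E] {S R : Setoid E} (h : S < R) :
    Nat.card (Quotient R) < Nat.card (Quotient S) := by
  by_contra! hc
  -- The projection `E / S → E / R` is onto, so with enough classes of `R` it is also injective.
  let f : Quotient S → Quotient R := Quotient.map' id fun _ _ hxy => h.le hxy
  have hf : Function.Surjective f := by
    intro q
    induction q using Quotient.inductionOn with
    | h x => exact ⟨Quotient.mk S x, rfl⟩
  have hb := hf.bijective_of_nat_card_le hc
  refine h.not_ge fun x y hxy => ?_
  have hq : f (Quotient.mk S x) = f (Quotient.mk S y) := Quotient.sound hxy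
  exact Quotient.exact (hb.injective hq)

/-- If `S` refines `R`, the sum over an `R`-class splits as a sum over the `S`-classes inside it. -/
theorem classSum_eq_sum_quotient {E : Type*} [Fintype E] (P : E → E → ℝ) {S R : Setoid E}
    (h : S ≤ R) (e c : E) :
    classSum P R e c =
      ∑ q : Quotient S, if R.r q.out c then classSum P S e q.out else 0 := by
  unfold classSum
  rw [← Finset.sum_fiberwise _ (fun x => Quotient.mk S x)]
  refine Finset.sum_congr rfl fun q _ => ?_
  have key : ∀ x, Quotient.mk S x = q ↔ S.r x q.out := fun x => by
    conv_lhs => rw [← Quotient.out_eq q]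
    exact Quotient.eq
  split_ifs with hq
  · refine Finset.sum_congr ?_ fun _ _ => rfl
    ext x
    simp only [Finset.mem_filter, Finset.mem_univ, true_and, key]
    exact ⟨fun hx => hx.2, fun hx => ⟨R.iseqv.trans (h hx) hq, hx⟩⟩
  · refine Finset.sum_eq_zero fun x hx => (hq ?_).elim
    simp only [Finset.mem_filter, Finset.mem_univ, true_and, key] at hx
    exact R.iseqv.trans (R.iseqv.symm (h hx.2)) hx.1

theorem Lumpable.le_Pop {E : Type*} [Fintype E] {P : E → E → ℝ} {S R : Setoid E}
    (hS : Lumpable P S) (h : S ≤ R) : S ≤ Pop P R := by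
  intro x y hxy
  refine ⟨h hxy, fun c => ?_⟩
  rw [classSum_eq_sum_quotient P h, classSum_eq_sum_quotient P h]
  refine Finset.sum_congr rfl fun q _ => ?_
  rw [hS x y hxy]

theorem IsClass.le_ME {E : Type*} {S : Setoid E} {T : Set E} (h : IsClass S T) : S ≤ ME T := by
  obtain ⟨t, rfl⟩ := h
  exact fun x y hxy =>
    ⟨fun hx => S.iseqv.trans (S.iseqv.symm hxy) hx, fun hy => S.iseqv.trans hxy hy⟩

/-- An equivalence relation between `S` and `M_E` still has `T` as a class. -/
theorem IsClass.of_le_of_le_ME {E : Type*} {S R : Setoid E} {T : Set E} (h : IsClass S T)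
    (hSR : S ≤ R) (hR : R ≤ ME T) : IsClass R T := by
  obtain ⟨t, ht⟩ := h
  have htT : t ∈ T := by rw [ht]; exact S.iseqv.refl t
  refine ⟨t, Set.ext fun x => ⟨fun hx => ?_, fun hx => (hR hx).2 htT⟩⟩
  rw [ht] at hx
  exact hSR hx

/-- A relation between `S` and `M_E` that `𝒫` does not refine any further is lumpable, hence equal
to the maximal relation `S`. -/
theorem eq_of_le_Pop {E : Type*} [Fintype E] {P : E → E → ℝ} {T : Set E} {S R : Setoid E}
    (hST : IsClass S T)
    (hmax : ∀ R' : Setoid E, Lumpable P R' → IsClass R' T →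
      ∀ e₁ e₂, R'.r e₁ e₂ → S.r e₁ e₂)
    (hSR : S ≤ R) (hR : R ≤ ME T) (hfix : R ≤ Pop P R) : R = S :=
  le_antisymm
    (fun x y hxy => hmax R (fun _ _ h => (hfix h).2) (hST.of_le_of_le_ME hSR hR) x y hxy) hSR

theorem two_le_card_quotient_ME {E : Type*} [Finite E] {T : Set E} (hT : T.Nonempty)
    (hTne : T ≠ Set.univ) : 2 ≤ Nat.card (Quotient (ME T)) := by
  obtain ⟨a, ha⟩ := hT
  obtain ⟨b, hb⟩ := (Set.ne_univ_iff_exists_notMem T).1 hTne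
  have : Nontrivial (Quotient (ME T)) :=
    ⟨Quotient.mk _ a, Quotient.mk _ b, fun hab => hb ((Quotient.exact hab : a ∈ T ↔ b ∈ T).1 ha)⟩
  exact Finite.one_lt_card

/-- With `N` the number of equivalence classes of the optimal relation `S`, one has
`𝒫^m(M_E) = S` for every `m ≥ N - 2`; in particular `𝒫^{|E|-2}(M_E) = S` if `|E| ≥ 2`. -/
theorem iterate_Pop_ME_eq_of_le {E : Type*} [Fintype E]
    (P : E → E → ℝ) (hP : IsRowStochastic P)
    (T : Set E) (hT : T.Nonempty) (hTne : T ≠ Set.univ)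
    (S : Setoid E) (hSl : Lumpable P S) (hST : IsClass S T)
    (hmax : ∀ R' : Setoid E, Lumpable P R' → IsClass R' T →
      ∀ e₁ e₂, R'.r e₁ e₂ → S.r e₁ e₂) :
    (∀ m, Nat.card (Quotient S) - 2 ≤ m → (Pop P)^[m] (ME T) = S) ∧
    (2 ≤ Fintype.card E → (Pop P)^[Fintype.card E - 2] (ME T) = S) := by
  have hle : ∀ n, S ≤ (Pop P)^[n] (ME T) ∧ (Pop P)^[n] (ME T) ≤ ME T := by
    intro n
    induction n with
    | zero => exact ⟨hST.le_ME, le_rfl⟩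
    | succ n ih =>
      rw [Function.iterate_succ_apply']
      exact ⟨hSl.le_Pop ih.1, (Pop_le P _).trans ih.2⟩
  have hcard : ∀ n, (Pop P)^[n] (ME T) = S ∨
      n + 2 ≤ Nat.card (Quotient ((Pop P)^[n] (ME T))) := by
    intro n
    induction n with
    | zero => exact Or.inr (two_le_card_quotient_ME hT hTne)
    | succ n ih =>
      rw [Function.iterate_succ_apply']
      rcases ih with ih | ih
      · left
        rw [ih]
        exact le_antisymm (Pop_le P S) (hSl.le_Pop le_rfl)
      · by_cases hfix : (Pop P)^[n] (ME T) ≤ Pop P ((Pop P)^[n] (ME T))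
        · left
          rw [eq_of_le_Pop hST hmax (hle n).1 (hle n).2 hfix]
          exact le_antisymm (Pop_le P S) (hSl.le_Pop le_rfl)
        · right
          have := card_quotient_lt_of_lt (lt_of_le_not_ge (Pop_le P _) hfix)
          omega
  have hmain : ∀ m, Nat.card (Quotient S) - 2 ≤ m → (Pop P)^[m] (ME T) = S := by
    intro m hm
    rcases hcard m with h | h
    · exact h
    · by_contra hne
      have := card_quotient_lt_of_lt (lt_of_le_of_ne (hle m).1 (Ne.symm hne))
      omega
  refine ⟨hmain, fun _ => hmain _ ?_⟩
  have hN : Nat.card (Quotient S) ≤ Nat.card E :=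
    Nat.card_le_card_of_surjective (Quotient.mk S) Quotient.mk_surjective
  rw [Nat.card_eq_fintype_card (α := E)] at hN
  omega
end
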